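/- If f is six times continuously differentiable on [0,1] and x ∈ [0,1], then there exist a constant C > 0 and an integer N such that for all n ≥ N, |D̃_n^{M,2}(f; x) − f(x)| ≤ C/n^2; that is, D̃_n^{M,2}(f; x) − f(x) = O(1/n^2) as n → ∞. -/

import Mathlib

open Filter Topology

/-- Bernstein basis polynomial `p_{n,k}(x)`, zero when `k < 0` or `k > n`. -/
noncomputable def bern (n : ℕ) (k : ℤ) (x : ℝ) : ℝ :=
  if 0 ≤ k ∧ k ≤ (n : ℤ) then (n.choose k.toNat : ℝ) * x ^ k.toNat * (1 - x) ^ (n - k.toNat)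
  else 0

/-- Second-order modified Bernstein basis `p̃_{n,k}^{M,2}(x)`. -/
noncomputable def pM2 (n : ℕ) (k : ℤ) (x : ℝ) : ℝ :=
  (((n : ℝ) - 2) * x ^ 2 - (n : ℝ) * x + 3 / 2) * bern (n - 2) k x
    + 2 * ((n : ℝ) - 2) * x * (1 - x) * bern (n - 2) (k - 1) x
    + (((n : ℝ) - 2) * x ^ 2 - ((n : ℝ) - 4) * x - 1 / 2) * bern (n - 2) (k - 2) x

/-- Second-order modified Durrmeyer operator `D̃_n^{M,2}(f;x)`. -/
noncomputable def DM2 (n : ℕ) (f : ℝ → ℝ) (x : ℝ) : ℝ :=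
  ((n : ℝ) + 1) * ∑ k ∈ Finset.range (n + 1),
    pM2 n k x * ∫ t in (0:ℝ)..1, bern n k t * f t

/-- Binomial expectation of a function. -/
noncomputable def S (m : ℕ) (x : ℝ) (g : ℕ → ℝ) : ℝ :=
  ∑ k ∈ Finset.range (m + 1), (m.choose k * x ^ k * (1 - x) ^ (m - k)) * g k

/-- Normalised Durrmeyer functional. -/
noncomputable def L (n k : ℕ) (g : ℝ → ℝ) : ℝ :=
  ((n : ℝ) + 1) * ∫ t in (0:ℝ)..1, (n.choose k * t ^ k * (1 - t) ^ (n - k)) * g t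

/-- Shifted positive operator. -/
noncomputable def E (m i : ℕ) (x : ℝ) (g : ℝ → ℝ) : ℝ :=
  S m x (fun k => L (m + 2) (k + i) g)

noncomputable def A0 (m : ℕ) (x : ℝ) : ℝ := m * x ^ 2 - (m + 2) * x + 3 / 2
noncomputable def A1 (m : ℕ) (x : ℝ) : ℝ := 2 * m * x * (1 - x)
noncomputable def A2 (m : ℕ) (x : ℝ) : ℝ := m * x ^ 2 - (m - 2) * x - 1 / 2

/-- The modified operator, in terms of the shifted ones. -/
noncomputable def T (m : ℕ) (x : ℝ) (g : ℝ → ℝ) : ℝ :=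
  A0 m x * E m 0 x g + A1 m x * E m 1 x g + A2 m x * E m 2 x g

lemma S_one (m : ℕ) (x : ℝ) : S m x (fun _ => 1) = 1 := by
  have h := add_pow x (1 - x) m
  rw [show x + (1 - x) = 1 by ring, one_pow] at h
  refine Eq.trans ?_ h.symm
  exact Finset.sum_congr rfl fun k _ => by ring

lemma S_rec (m : ℕ) (x : ℝ) (g : ℝ → ℝ) (v : ℝ)
    (h : ∀ q : ℕ, m = q + 1 → S q x (fun k => g k) = v) :
    S m x (fun k => (k:ℝ) * g ((k:ℝ) - 1)) = m * x * v := by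
  cases m with
  | zero => simp [S]
  | succ q =>
    rw [← h q rfl]
    unfold S
    rw [Finset.sum_range_succ', Finset.mul_sum]
    simp only [Nat.cast_zero, zero_mul, mul_zero, add_zero]
    refine Finset.sum_congr rfl fun k _ => ?_
    have h1 : (((q + 1).choose (k + 1) : ℕ) : ℝ) * ((k:ℝ) + 1) = ((q:ℝ) + 1) * q.choose k := by
      exact_mod_cast (Nat.add_one_mul_choose_eq q k).symm
    rw [Nat.succ_sub_succ]
    push_cast
    rw [add_sub_cancel_right]
    linear_combination (x ^ (k+1) * (1 - x) ^ (q - k) * g k) * h1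

lemma int_bern (n k : ℕ) (hk : k ≤ n) :
    ((n:ℝ) + 1) * ∫ t in (0:ℝ)..1, ((n.choose k : ℝ) * t ^ k * (1 - t) ^ (n - k)) = 1 := by
  induction k with
  | zero =>
    have := intervalIntegral.integral_comp_sub_left (fun t : ℝ => t ^ n) (a := 0) (b := 1) 1
    simp only [Nat.choose_zero_right, Nat.cast_one, pow_zero, one_mul, Nat.sub_zero]
    rw [this, integral_pow]
    have : (n:ℝ) + 1 ≠ 0 := by positivity
    simp
    field_simp
  | succ k ih =>
    refine Eq.trans ?_ (ih (by omega))
    congr 1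
    obtain ⟨d, rfl⟩ : ∃ d, n = k + 1 + d := ⟨n - (k+1), by omega⟩
    rw [show k + 1 + d - (k + 1) = d by omega, show k + 1 + d - k = d + 1 by omega]
    have hd : ∀ t ∈ Set.uIcc (0:ℝ) 1, HasDerivAt
        (fun t : ℝ => t ^ (k+1) * (1 - t) ^ (d+1))
        (((k:ℝ) + 1) * t ^ k * (1 - t) ^ (d+1) - ((d:ℝ) + 1) * t ^ (k+1) * (1-t) ^ d) t := by
      intro t _
      have h1 := hasDerivAt_pow (k+1) t
      have h2 := ((hasDerivAt_id t).const_sub 1).pow (d+1)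
      have h3 := h1.mul h2
      refine h3.congr_deriv ?_
      simp
      ring
    have h0 := intervalIntegral.integral_eq_sub_of_hasDerivAt hd
      (Continuous.intervalIntegrable (by fun_prop) _ _)
    rw [intervalIntegral.integral_sub (Continuous.intervalIntegrable (by fun_prop) _ _)
      (Continuous.intervalIntegrable (by fun_prop) _ _)] at h0
    simp only [mul_assoc, intervalIntegral.integral_const_mul] at h0 ⊢
    simp at h0
    have hc : (((k+1+d).choose (k+1) : ℕ) : ℝ) * ((k:ℝ) + 1) = (k+1+d).choose k * ((d:ℝ) + 1) := by
      have := Nat.choose_succ_right_eq (k+1+d) k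
      rw [show k + 1 + d - k = d + 1 by omega] at this
      exact_mod_cast this
    have hk0 : (k:ℝ) + 1 ≠ 0 := by positivity
    apply mul_left_cancel₀ hk0
    linear_combination (∫ t in (0:ℝ)..1, t ^ (k+1) * (1-t)^d) * hc - ((k+1+d).choose k : ℝ) * h0

lemma L_pow (l n k : ℕ) (hk : k ≤ n) :
    L n k (fun t => t ^ l) * ∏ a ∈ Finset.range l, ((n:ℝ) + 2 + a)
      = ∏ a ∈ Finset.range l, ((k:ℝ) + 1 + a) := by
  induction l generalizing n k with
  | zero => simpa [L] using int_bern n k hk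
  | succ l ih =>
    have h1 := ih (n + 1) (k + 1) (by omega)
    have hL : L n k (fun t => t ^ (l+1)) * ((n:ℝ) + 2) = ((k:ℝ) + 1) * L (n+1) (k+1) (fun t => t ^ l) := by
      unfold L
      have : ∀ t : ℝ, ((n:ℝ) + 1) * ((n.choose k * t ^ k * (1 - t) ^ (n - k)) * t ^ (l+1))
          = ((k:ℝ) + 1) * (((n+1).choose (k+1) * t ^ (k+1) * (1 - t) ^ (n + 1 - (k+1))) * t ^ l) := by
        intro t
        have hc : (((n + 1).choose (k + 1) : ℕ) : ℝ) * ((k:ℝ) + 1) = ((n:ℝ) + 1) * n.choose k := by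
          exact_mod_cast (Nat.add_one_mul_choose_eq n k).symm
        rw [Nat.succ_sub_succ]
        linear_combination -(t ^ (k+1) * (1 - t) ^ (n - k) * t ^ l) * hc
      rw [← intervalIntegral.integral_const_mul]
      simp only [this]
      rw [intervalIntegral.integral_const_mul]
      push_cast
      ring
    rw [Finset.prod_range_succ', Finset.prod_range_succ']
    have e1 : ∏ a ∈ Finset.range l, ((n:ℝ) + 2 + ((a+1:ℕ):ℝ)) = ∏ a ∈ Finset.range l, (((n+1:ℕ):ℝ) + 2 + a) :=
      Finset.prod_congr rfl fun a _ => by push_cast; ring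
    have e2 : ∏ a ∈ Finset.range l, ((k:ℝ) + 1 + ((a+1:ℕ):ℝ)) = ∏ a ∈ Finset.range l, (((k+1:ℕ):ℝ) + 1 + a) :=
      Finset.prod_congr rfl fun a _ => by push_cast; ring
    rw [e1, e2, ← h1]
    push_cast
    linear_combination (∏ a ∈ Finset.range l, ((n:ℝ) + 1 + 2 + a)) * hL

lemma L_sum {ι : Type*} (s : Finset ι) (n k : ℕ) (c : ι → ℝ) (g : ι → ℝ → ℝ)
    (hg : ∀ i ∈ s, ContinuousOn (g i) (Set.Icc 0 1)) :
    L n k (fun t => ∑ i ∈ s, c i * g i t) = ∑ i ∈ s, c i * L n k (g i) := by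
  unfold L
  simp only [Finset.mul_sum]
  rw [intervalIntegral.integral_finsetSum, Finset.mul_sum]
  · refine Finset.sum_congr rfl fun i _ => ?_
    rw [mul_left_comm (c i), ← intervalIntegral.integral_const_mul (c i)]
    congr 2
    funext t
    ring
  · intro i hi
    apply ContinuousOn.intervalIntegrable
    rw [Set.uIcc_of_le zero_le_one]
    exact ContinuousOn.mul (by fun_prop) (continuousOn_const.mul (hg i hi))

lemma E_sum {ι : Type*} (s : Finset ι) (m i : ℕ) (x : ℝ) (c : ι → ℝ) (g : ι → ℝ → ℝ)
    (hg : ∀ i ∈ s, ContinuousOn (g i) (Set.Icc 0 1)) :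
    E m i x (fun t => ∑ i ∈ s, c i * g i t) = ∑ j ∈ s, c j * E m i x (g j) := by
  unfold E S
  simp only [L_sum s _ _ c g hg, Finset.mul_sum]
  rw [Finset.sum_comm]
  exact Finset.sum_congr rfl fun _ _ => Finset.sum_congr rfl fun _ _ => by ring

lemma E_cen (m i j : ℕ) (x : ℝ) : E m i x (fun t => (t - x) ^ j)
    = ∑ l ∈ Finset.range (j + 1), ((j.choose l : ℝ) * (-x) ^ (j - l)) * E m i x (fun t => t ^ l) := by
  rw [← E_sum _ _ _ _ _ (fun l t => t ^ l) (fun l _ => by fun_prop)]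
  congr 1
  funext t
  rw [sub_eq_add_neg, add_pow]
  exact Finset.sum_congr rfl fun l _ => by ring

lemma S_ff0 (m : ℕ) (x : ℝ) : S m x (fun k => 1) = (1) * x ^ 0 := by
  simpa using S_one m x

lemma S_ff1 (m : ℕ) (x : ℝ) : S m x (fun k => (k:ℝ)) = ((m:ℝ)) * x ^ 1 := by
  have h := S_rec m x (fun y => 1) (1 * x ^ 0)
    (fun q hq => by subst hq; rw [S_ff0 q x]; )
  rw [show (fun k : ℕ => (k:ℝ)) = (fun k : ℕ => (k:ℝ) * (fun y : ℝ => 1) ((k:ℝ) - 1)) from by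
    funext k; ring, h]
  ring

lemma S_ff2 (m : ℕ) (x : ℝ) : S m x (fun k => (k:ℝ) * ((k:ℝ) - 1)) = ((m:ℝ) * ((m:ℝ) - 1)) * x ^ 2 := by
  have h := S_rec m x (fun y => y) (((m:ℝ)-1) * x ^ 1)
    (fun q hq => by subst hq; rw [S_ff1 q x]; push_cast; ring)
  rw [show (fun k : ℕ => (k:ℝ) * ((k:ℝ) - 1)) = (fun k : ℕ => (k:ℝ) * (fun y : ℝ => y) ((k:ℝ) - 1)) from by
    funext k; ring, h]
  ring

lemma S_ff3 (m : ℕ) (x : ℝ) : S m x (fun k => (k:ℝ) * ((k:ℝ) - 1) * ((k:ℝ) - 2)) = ((m:ℝ) * ((m:ℝ) - 1) * ((m:ℝ) - 2)) * x ^ 3 := by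
  have h := S_rec m x (fun y => y * (y - 1)) (((m:ℝ)-1) * (((m:ℝ)-1) - 1) * x ^ 2)
    (fun q hq => by subst hq; rw [S_ff2 q x]; push_cast; ring)
  rw [show (fun k : ℕ => (k:ℝ) * ((k:ℝ) - 1) * ((k:ℝ) - 2)) = (fun k : ℕ => (k:ℝ) * (fun y : ℝ => y * (y - 1)) ((k:ℝ) - 1)) from by
    funext k; ring, h]
  ring

lemma S_ff4 (m : ℕ) (x : ℝ) : S m x (fun k => (k:ℝ) * ((k:ℝ) - 1) * ((k:ℝ) - 2) * ((k:ℝ) - 3)) = ((m:ℝ) * ((m:ℝ) - 1) * ((m:ℝ) - 2) * ((m:ℝ) - 3)) * x ^ 4 := by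
  have h := S_rec m x (fun y => y * (y - 1) * (y - 2)) (((m:ℝ)-1) * (((m:ℝ)-1) - 1) * (((m:ℝ)-1) - 2) * x ^ 3)
    (fun q hq => by subst hq; rw [S_ff3 q x]; push_cast; ring)
  rw [show (fun k : ℕ => (k:ℝ) * ((k:ℝ) - 1) * ((k:ℝ) - 2) * ((k:ℝ) - 3)) = (fun k : ℕ => (k:ℝ) * (fun y : ℝ => y * (y - 1) * (y - 2)) ((k:ℝ) - 1)) from by
    funext k; ring, h]
  ring

lemma S_ff5 (m : ℕ) (x : ℝ) : S m x (fun k => (k:ℝ) * ((k:ℝ) - 1) * ((k:ℝ) - 2) * ((k:ℝ) - 3) * ((k:ℝ) - 4)) = ((m:ℝ) * ((m:ℝ) - 1) * ((m:ℝ) - 2) * ((m:ℝ) - 3) * ((m:ℝ) - 4)) * x ^ 5 := by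
  have h := S_rec m x (fun y => y * (y - 1) * (y - 2) * (y - 3)) (((m:ℝ)-1) * (((m:ℝ)-1) - 1) * (((m:ℝ)-1) - 2) * (((m:ℝ)-1) - 3) * x ^ 4)
    (fun q hq => by subst hq; rw [S_ff4 q x]; push_cast; ring)
  rw [show (fun k : ℕ => (k:ℝ) * ((k:ℝ) - 1) * ((k:ℝ) - 2) * ((k:ℝ) - 3) * ((k:ℝ) - 4)) = (fun k : ℕ => (k:ℝ) * (fun y : ℝ => y * (y - 1) * (y - 2) * (y - 3)) ((k:ℝ) - 1)) from by
    funext k; ring, h]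
  ring

lemma S_ff6 (m : ℕ) (x : ℝ) : S m x (fun k => (k:ℝ) * ((k:ℝ) - 1) * ((k:ℝ) - 2) * ((k:ℝ) - 3) * ((k:ℝ) - 4) * ((k:ℝ) - 5)) = ((m:ℝ) * ((m:ℝ) - 1) * ((m:ℝ) - 2) * ((m:ℝ) - 3) * ((m:ℝ) - 4) * ((m:ℝ) - 5)) * x ^ 6 := by
  have h := S_rec m x (fun y => y * (y - 1) * (y - 2) * (y - 3) * (y - 4)) (((m:ℝ)-1) * (((m:ℝ)-1) - 1) * (((m:ℝ)-1) - 2) * (((m:ℝ)-1) - 3) * (((m:ℝ)-1) - 4) * x ^ 5)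
    (fun q hq => by subst hq; rw [S_ff5 q x]; push_cast; ring)
  rw [show (fun k : ℕ => (k:ℝ) * ((k:ℝ) - 1) * ((k:ℝ) - 2) * ((k:ℝ) - 3) * ((k:ℝ) - 4) * ((k:ℝ) - 5)) = (fun k : ℕ => (k:ℝ) * (fun y : ℝ => y * (y - 1) * (y - 2) * (y - 3) * (y - 4)) ((k:ℝ) - 1)) from by
    funext k; ring, h]
  ring

lemma E_pow0 (m i : ℕ) (hi : i ≤ 2) (x : ℝ) :
    E m i x (fun t => t ^ 0) * (1) =
      1 * (1) * (1) * x ^ 0 := by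
  have h : E m i x (fun t => t ^ 0) * (1) = (1 * (1)) * S m x (fun k => 1) := by
    unfold E S
    simp only [Finset.sum_mul, Finset.mul_sum, ← Finset.sum_add_distrib]
    refine Finset.sum_congr rfl fun k hk => ?_
    have hk' : k + i ≤ m + 2 := by have := Finset.mem_range.1 hk; omega
    have h0 := L_pow 0 (m + 2) (k + i) hk'
    simp only [Finset.prod_range_succ, Finset.prod_range_zero] at h0
    push_cast at h0
    linear_combination (m.choose k * x ^ k * (1 - x) ^ (m - k)) * h0
  rw [h]
  simp only [S_ff0]
  ring

lemma E_pow1 (m i : ℕ) (hi : i ≤ 2) (x : ℝ) :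
    E m i x (fun t => t ^ 1) * (((m:ℝ) + 4)) =
      1 * (((i:ℝ) + 1)) * (1) * x ^ 0
      + 1 * (1) * ((m:ℝ)) * x ^ 1 := by
  have h : E m i x (fun t => t ^ 1) * (((m:ℝ) + 4)) = (1 * (((i:ℝ) + 1))) * S m x (fun k => 1) + (1 * (1)) * S m x (fun k => (k:ℝ)) := by
    unfold E S
    simp only [Finset.sum_mul, Finset.mul_sum, ← Finset.sum_add_distrib]
    refine Finset.sum_congr rfl fun k hk => ?_
    have hk' : k + i ≤ m + 2 := by have := Finset.mem_range.1 hk; omega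
    have h0 := L_pow 1 (m + 2) (k + i) hk'
    simp only [Finset.prod_range_succ, Finset.prod_range_zero] at h0
    push_cast at h0
    linear_combination (m.choose k * x ^ k * (1 - x) ^ (m - k)) * h0
  rw [h]
  simp only [S_ff0, S_ff1]
  ring

lemma E_pow2 (m i : ℕ) (hi : i ≤ 2) (x : ℝ) :
    E m i x (fun t => t ^ 2) * (((m:ℝ) + 4) * ((m:ℝ) + 5)) =
      1 * (((i:ℝ) + 1) * ((i:ℝ) + 2)) * (1) * x ^ 0
      + 2 * (((i:ℝ) + 2)) * ((m:ℝ)) * x ^ 1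
      + 1 * (1) * ((m:ℝ) * ((m:ℝ) - 1)) * x ^ 2 := by
  have h : E m i x (fun t => t ^ 2) * (((m:ℝ) + 4) * ((m:ℝ) + 5)) = (1 * (((i:ℝ) + 1) * ((i:ℝ) + 2))) * S m x (fun k => 1) + (2 * (((i:ℝ) + 2))) * S m x (fun k => (k:ℝ)) + (1 * (1)) * S m x (fun k => (k:ℝ) * ((k:ℝ) - 1)) := by
    unfold E S
    simp only [Finset.sum_mul, Finset.mul_sum, ← Finset.sum_add_distrib]
    refine Finset.sum_congr rfl fun k hk => ?_
    have hk' : k + i ≤ m + 2 := by have := Finset.mem_range.1 hk; omega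
    have h0 := L_pow 2 (m + 2) (k + i) hk'
    simp only [Finset.prod_range_succ, Finset.prod_range_zero] at h0
    push_cast at h0
    linear_combination (m.choose k * x ^ k * (1 - x) ^ (m - k)) * h0
  rw [h]
  simp only [S_ff0, S_ff1, S_ff2]
  ring

lemma E_pow3 (m i : ℕ) (hi : i ≤ 2) (x : ℝ) :
    E m i x (fun t => t ^ 3) * (((m:ℝ) + 4) * ((m:ℝ) + 5) * ((m:ℝ) + 6)) =
      1 * (((i:ℝ) + 1) * ((i:ℝ) + 2) * ((i:ℝ) + 3)) * (1) * x ^ 0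
      + 3 * (((i:ℝ) + 2) * ((i:ℝ) + 3)) * ((m:ℝ)) * x ^ 1
      + 3 * (((i:ℝ) + 3)) * ((m:ℝ) * ((m:ℝ) - 1)) * x ^ 2
      + 1 * (1) * ((m:ℝ) * ((m:ℝ) - 1) * ((m:ℝ) - 2)) * x ^ 3 := by
  have h : E m i x (fun t => t ^ 3) * (((m:ℝ) + 4) * ((m:ℝ) + 5) * ((m:ℝ) + 6)) = (1 * (((i:ℝ) + 1) * ((i:ℝ) + 2) * ((i:ℝ) + 3))) * S m x (fun k => 1) + (3 * (((i:ℝ) + 2) * ((i:ℝ) + 3))) * S m x (fun k => (k:ℝ)) + (3 * (((i:ℝ) + 3))) * S m x (fun k => (k:ℝ) * ((k:ℝ) - 1)) + (1 * (1)) * S m x (fun k => (k:ℝ) * ((k:ℝ) - 1) * ((k:ℝ) - 2)) := by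
    unfold E S
    simp only [Finset.sum_mul, Finset.mul_sum, ← Finset.sum_add_distrib]
    refine Finset.sum_congr rfl fun k hk => ?_
    have hk' : k + i ≤ m + 2 := by have := Finset.mem_range.1 hk; omega
    have h0 := L_pow 3 (m + 2) (k + i) hk'
    simp only [Finset.prod_range_succ, Finset.prod_range_zero] at h0
    push_cast at h0
    linear_combination (m.choose k * x ^ k * (1 - x) ^ (m - k)) * h0
  rw [h]
  simp only [S_ff0, S_ff1, S_ff2, S_ff3]
  ring

lemma E_pow4 (m i : ℕ) (hi : i ≤ 2) (x : ℝ) :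
    E m i x (fun t => t ^ 4) * (((m:ℝ) + 4) * ((m:ℝ) + 5) * ((m:ℝ) + 6) * ((m:ℝ) + 7)) =
      1 * (((i:ℝ) + 1) * ((i:ℝ) + 2) * ((i:ℝ) + 3) * ((i:ℝ) + 4)) * (1) * x ^ 0
      + 4 * (((i:ℝ) + 2) * ((i:ℝ) + 3) * ((i:ℝ) + 4)) * ((m:ℝ)) * x ^ 1
      + 6 * (((i:ℝ) + 3) * ((i:ℝ) + 4)) * ((m:ℝ) * ((m:ℝ) - 1)) * x ^ 2
      + 4 * (((i:ℝ) + 4)) * ((m:ℝ) * ((m:ℝ) - 1) * ((m:ℝ) - 2)) * x ^ 3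
      + 1 * (1) * ((m:ℝ) * ((m:ℝ) - 1) * ((m:ℝ) - 2) * ((m:ℝ) - 3)) * x ^ 4 := by
  have h : E m i x (fun t => t ^ 4) * (((m:ℝ) + 4) * ((m:ℝ) + 5) * ((m:ℝ) + 6) * ((m:ℝ) + 7)) = (1 * (((i:ℝ) + 1) * ((i:ℝ) + 2) * ((i:ℝ) + 3) * ((i:ℝ) + 4))) * S m x (fun k => 1) + (4 * (((i:ℝ) + 2) * ((i:ℝ) + 3) * ((i:ℝ) + 4))) * S m x (fun k => (k:ℝ)) + (6 * (((i:ℝ) + 3) * ((i:ℝ) + 4))) * S m x (fun k => (k:ℝ) * ((k:ℝ) - 1)) + (4 * (((i:ℝ) + 4))) * S m x (fun k => (k:ℝ) * ((k:ℝ) - 1) * ((k:ℝ) - 2)) + (1 * (1)) * S m x (fun k => (k:ℝ) * ((k:ℝ) - 1) * ((k:ℝ) - 2) * ((k:ℝ) - 3)) := by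
    unfold E S
    simp only [Finset.sum_mul, Finset.mul_sum, ← Finset.sum_add_distrib]
    refine Finset.sum_congr rfl fun k hk => ?_
    have hk' : k + i ≤ m + 2 := by have := Finset.mem_range.1 hk; omega
    have h0 := L_pow 4 (m + 2) (k + i) hk'
    simp only [Finset.prod_range_succ, Finset.prod_range_zero] at h0
    push_cast at h0
    linear_combination (m.choose k * x ^ k * (1 - x) ^ (m - k)) * h0
  rw [h]
  simp only [S_ff0, S_ff1, S_ff2, S_ff3, S_ff4]
  ring

lemma E_pow5 (m i : ℕ) (hi : i ≤ 2) (x : ℝ) :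
    E m i x (fun t => t ^ 5) * (((m:ℝ) + 4) * ((m:ℝ) + 5) * ((m:ℝ) + 6) * ((m:ℝ) + 7) * ((m:ℝ) + 8)) =
      1 * (((i:ℝ) + 1) * ((i:ℝ) + 2) * ((i:ℝ) + 3) * ((i:ℝ) + 4) * ((i:ℝ) + 5)) * (1) * x ^ 0
      + 5 * (((i:ℝ) + 2) * ((i:ℝ) + 3) * ((i:ℝ) + 4) * ((i:ℝ) + 5)) * ((m:ℝ)) * x ^ 1
      + 10 * (((i:ℝ) + 3) * ((i:ℝ) + 4) * ((i:ℝ) + 5)) * ((m:ℝ) * ((m:ℝ) - 1)) * x ^ 2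
      + 10 * (((i:ℝ) + 4) * ((i:ℝ) + 5)) * ((m:ℝ) * ((m:ℝ) - 1) * ((m:ℝ) - 2)) * x ^ 3
      + 5 * (((i:ℝ) + 5)) * ((m:ℝ) * ((m:ℝ) - 1) * ((m:ℝ) - 2) * ((m:ℝ) - 3)) * x ^ 4
      + 1 * (1) * ((m:ℝ) * ((m:ℝ) - 1) * ((m:ℝ) - 2) * ((m:ℝ) - 3) * ((m:ℝ) - 4)) * x ^ 5 := by
  have h : E m i x (fun t => t ^ 5) * (((m:ℝ) + 4) * ((m:ℝ) + 5) * ((m:ℝ) + 6) * ((m:ℝ) + 7) * ((m:ℝ) + 8)) = (1 * (((i:ℝ) + 1) * ((i:ℝ) + 2) * ((i:ℝ) + 3) * ((i:ℝ) + 4) * ((i:ℝ) + 5))) * S m x (fun k => 1) + (5 * (((i:ℝ) + 2) * ((i:ℝ) + 3) * ((i:ℝ) + 4) * ((i:ℝ) + 5))) * S m x (fun k => (k:ℝ)) + (10 * (((i:ℝ) + 3) * ((i:ℝ) + 4) * ((i:ℝ) + 5))) * S m x (fun k => (k:ℝ) * ((k:ℝ) - 1)) + (10 * (((i:ℝ)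 + 4) * ((i:ℝ) + 5))) * S m x (fun k => (k:ℝ) * ((k:ℝ) - 1) * ((k:ℝ) - 2)) + (5 * (((i:ℝ) + 5))) * S m x (fun k => (k:ℝ) * ((k:ℝ) - 1) * ((k:ℝ) - 2) * ((k:ℝ) - 3)) + (1 * (1)) * S m x (fun k => (k:ℝ) * ((k:ℝ) - 1) * ((k:ℝ) - 2) * ((k:ℝ) - 3) * ((k:ℝ) - 4)) := by
    unfold E S
    simp only [Finset.sum_mul, Finset.mul_sum, ← Finset.sum_add_distrib]
    refine Finset.sum_congr rfl fun k hk => ?_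
    have hk' : k + i ≤ m + 2 := by have := Finset.mem_range.1 hk; omega
    have h0 := L_pow 5 (m + 2) (k + i) hk'
    simp only [Finset.prod_range_succ, Finset.prod_range_zero] at h0
    push_cast at h0
    linear_combination (m.choose k * x ^ k * (1 - x) ^ (m - k)) * h0
  rw [h]
  simp only [S_ff0, S_ff1, S_ff2, S_ff3, S_ff4, S_ff5]
  ring

lemma E_pow6 (m i : ℕ) (hi : i ≤ 2) (x : ℝ) :
    E m i x (fun t => t ^ 6) * (((m:ℝ) + 4) * ((m:ℝ) + 5) * ((m:ℝ) + 6) * ((m:ℝ) + 7) * ((m:ℝ) + 8) * ((m:ℝ) + 9)) =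
      1 * (((i:ℝ) + 1) * ((i:ℝ) + 2) * ((i:ℝ) + 3) * ((i:ℝ) + 4) * ((i:ℝ) + 5) * ((i:ℝ) + 6)) * (1) * x ^ 0
      + 6 * (((i:ℝ) + 2) * ((i:ℝ) + 3) * ((i:ℝ) + 4) * ((i:ℝ) + 5) * ((i:ℝ) + 6)) * ((m:ℝ)) * x ^ 1
      + 15 * (((i:ℝ) + 3) * ((i:ℝ) + 4) * ((i:ℝ) + 5) * ((i:ℝ) + 6)) * ((m:ℝ) * ((m:ℝ) - 1)) * x ^ 2
      + 20 * (((i:ℝ) + 4) * ((i:ℝ) + 5) * ((i:ℝ) + 6)) * ((m:ℝ) * ((m:ℝ) - 1) * ((m:ℝ) - 2)) * x ^ 3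
      + 15 * (((i:ℝ) + 5) * ((i:ℝ) + 6)) * ((m:ℝ) * ((m:ℝ) - 1) * ((m:ℝ) - 2) * ((m:ℝ) - 3)) * x ^ 4
      + 6 * (((i:ℝ) + 6)) * ((m:ℝ) * ((m:ℝ) - 1) * ((m:ℝ) - 2) * ((m:ℝ) - 3) * ((m:ℝ) - 4)) * x ^ 5
      + 1 * (1) * ((m:ℝ) * ((m:ℝ) - 1) * ((m:ℝ) - 2) * ((m:ℝ) - 3) * ((m:ℝ) - 4) * ((m:ℝ) - 5)) * x ^ 6 := by
  have h : E m i x (fun t => t ^ 6) * (((m:ℝ) + 4) * ((m:ℝ) + 5) * ((m:ℝ) + 6) * ((m:ℝ) + 7) * ((m:ℝ) + 8) * ((m:ℝ) + 9)) = (1 * (((i:ℝ) + 1) * ((i:ℝ) + 2) * ((i:ℝ) + 3) * ((i:ℝ) + 4) * ((i:ℝ) + 5) * ((i:ℝ) + 6))) * S m x (fun k => 1) + (6 * (((i:ℝ) + 2) * ((i:ℝ) + 3) * ((i:ℝ) + 4) * ((i:ℝ) + 5) * ((i:ℝ) + 6))) * S m x (fun k => (k:ℝ)) + (15 * (((i:ℝ)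 + 3) * ((i:ℝ) + 4) * ((i:ℝ) + 5) * ((i:ℝ) + 6))) * S m x (fun k => (k:ℝ) * ((k:ℝ) - 1)) + (20 * (((i:ℝ) + 4) * ((i:ℝ) + 5) * ((i:ℝ) + 6))) * S m x (fun k => (k:ℝ) * ((k:ℝ) - 1) * ((k:ℝ) - 2)) + (15 * (((i:ℝ) + 5) * ((i:ℝ) + 6))) * S m x (fun k => (k:ℝ) * ((k:ℝ) - 1) * ((k:ℝ) - 2) * ((k:ℝ) - 3)) + (6 * (((i:ℝ) + 6))) * S m x (fun k => (k:ℝ) * ((k:ℝ) - 1) * ((k:ℝ) - 2) * ((k:ℝ) - 3) * ((k:ℝ) - 4)) + (1 * (1)) * S m x (fun k => (k:ℝ) * ((k:ℝ) - 1) * ((k:ℝ) - 2) * ((k:ℝ) - 3) * ((k:ℝ) - 4) * ((k:ℝ) - 5)) := by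
    unfold E S
    simp only [Finset.sum_mul, Finset.mul_sum, ← Finset.sum_add_distrib]
    refine Finset.sum_congr rfl fun k hk => ?_
    have hk' : k + i ≤ m + 2 := by have := Finset.mem_range.1 hk; omega
    have h0 := L_pow 6 (m + 2) (k + i) hk'
    simp only [Finset.prod_range_succ, Finset.prod_range_zero] at h0
    push_cast at h0
    linear_combination (m.choose k * x ^ k * (1 - x) ^ (m - k)) * h0
  rw [h]
  simp only [S_ff0, S_ff1, S_ff2, S_ff3, S_ff4, S_ff5, S_ff6]
  ring

lemma T_cen0 (m : ℕ) (x : ℝ) :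
    T m x (fun t => (t - x) ^ 0) * (1) =
      ((1) * x ^ 0) := by
  unfold T
  simp only [E_cen, Finset.sum_range_succ, Finset.sum_range_zero]

  have h00 := E_pow0 m 0 (by norm_num) x
  have h10 := E_pow0 m 1 (by norm_num) x
  have h20 := E_pow0 m 2 (by norm_num) x
  push_cast at h00 h10 h20
  simp only [Nat.choose, A0, A1, A2]
  push_cast
  linear_combination (m * x ^ 2 - (m + 2) * x + 3 / 2) * (1 * (-x) ^ 0 * (1)) * h00
    + (2 * m * x * (1 - x)) * (1 * (-x) ^ 0 * (1)) * h10
    + (m * x ^ 2 - (m - 2) * x - 1 / 2) * (1 * (-x) ^ 0 * (1)) * h20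

lemma T_cen1 (m : ℕ) (x : ℝ) :
    T m x (fun t => (t - x) ^ 1) * (((m:ℝ) + 4)) =
      (0) := by
  unfold T
  simp only [E_cen, Finset.sum_range_succ, Finset.sum_range_zero]

  have h00 := E_pow0 m 0 (by norm_num) x
  have h01 := E_pow1 m 0 (by norm_num) x
  have h10 := E_pow0 m 1 (by norm_num) x
  have h11 := E_pow1 m 1 (by norm_num) x
  have h20 := E_pow0 m 2 (by norm_num) x
  have h21 := E_pow1 m 2 (by norm_num) x
  push_cast at h00 h01 h10 h11 h20 h21
  simp only [Nat.choose, A0, A1, A2]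
  push_cast
  linear_combination (m * x ^ 2 - (m + 2) * x + 3 / 2) * (1 * (-x) ^ 1 * (((m:ℝ) + 4))) * h00
    + (m * x ^ 2 - (m + 2) * x + 3 / 2) * (1 * (-x) ^ 0 * (1)) * h01
    + (2 * m * x * (1 - x)) * (1 * (-x) ^ 1 * (((m:ℝ) + 4))) * h10
    + (2 * m * x * (1 - x)) * (1 * (-x) ^ 0 * (1)) * h11
    + (m * x ^ 2 - (m - 2) * x - 1 / 2) * (1 * (-x) ^ 1 * (((m:ℝ) + 4))) * h20
    + (m * x ^ 2 - (m - 2) * x - 1 / 2) * (1 * (-x) ^ 0 * (1)) * h21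

lemma T_cen2 (m : ℕ) (x : ℝ) :
    T m x (fun t => (t - x) ^ 2) * (((m:ℝ) + 4) * ((m:ℝ) + 5)) =
      ((-3) * x ^ 0 + (20) * x ^ 1 + (-20) * x ^ 2) := by
  unfold T
  simp only [E_cen, Finset.sum_range_succ, Finset.sum_range_zero]

  have h00 := E_pow0 m 0 (by norm_num) x
  have h01 := E_pow1 m 0 (by norm_num) x
  have h02 := E_pow2 m 0 (by norm_num) x
  have h10 := E_pow0 m 1 (by norm_num) x
  have h11 := E_pow1 m 1 (by norm_num) x
  have h12 := E_pow2 m 1 (by norm_num) x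
  have h20 := E_pow0 m 2 (by norm_num) x
  have h21 := E_pow1 m 2 (by norm_num) x
  have h22 := E_pow2 m 2 (by norm_num) x
  push_cast at h00 h01 h02 h10 h11 h12 h20 h21 h22
  simp only [Nat.choose, A0, A1, A2]
  push_cast
  linear_combination (m * x ^ 2 - (m + 2) * x + 3 / 2) * (1 * (-x) ^ 2 * (((m:ℝ) + 4) * ((m:ℝ) + 5))) * h00
    + (m * x ^ 2 - (m + 2) * x + 3 / 2) * (2 * (-x) ^ 1 * (((m:ℝ) + 5))) * h01
    + (m * x ^ 2 - (m + 2) * x + 3 / 2) * (1 * (-x) ^ 0 * (1)) * h02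
    + (2 * m * x * (1 - x)) * (1 * (-x) ^ 2 * (((m:ℝ) + 4) * ((m:ℝ) + 5))) * h10
    + (2 * m * x * (1 - x)) * (2 * (-x) ^ 1 * (((m:ℝ) + 5))) * h11
    + (2 * m * x * (1 - x)) * (1 * (-x) ^ 0 * (1)) * h12
    + (m * x ^ 2 - (m - 2) * x - 1 / 2) * (1 * (-x) ^ 2 * (((m:ℝ) + 4) * ((m:ℝ) + 5))) * h20
    + (m * x ^ 2 - (m - 2) * x - 1 / 2) * (2 * (-x) ^ 1 * (((m:ℝ) + 5))) * h21
    + (m * x ^ 2 - (m - 2) * x - 1 / 2) * (1 * (-x) ^ 0 * (1)) * h22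

lemma T_cen3 (m : ℕ) (x : ℝ) :
    T m x (fun t => (t - x) ^ 3) * (((m:ℝ) + 4) * ((m:ℝ) + 5) * ((m:ℝ) + 6)) =
      (((-21) * x ^ 0 + (186) * x ^ 1 + (-432) * x ^ 2 + (288) * x ^ 3) + ((m:ℝ) + 2) * ((-12) * x ^ 1 + (36) * x ^ 2 + (-24) * x ^ 3)) := by
  unfold T
  simp only [E_cen, Finset.sum_range_succ, Finset.sum_range_zero]

  have h00 := E_pow0 m 0 (by norm_num) x
  have h01 := E_pow1 m 0 (by norm_num) x
  have h02 := E_pow2 m 0 (by norm_num) x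
  have h03 := E_pow3 m 0 (by norm_num) x
  have h10 := E_pow0 m 1 (by norm_num) x
  have h11 := E_pow1 m 1 (by norm_num) x
  have h12 := E_pow2 m 1 (by norm_num) x
  have h13 := E_pow3 m 1 (by norm_num) x
  have h20 := E_pow0 m 2 (by norm_num) x
  have h21 := E_pow1 m 2 (by norm_num) x
  have h22 := E_pow2 m 2 (by norm_num) x
  have h23 := E_pow3 m 2 (by norm_num) x
  push_cast at h00 h01 h02 h03 h10 h11 h12 h13 h20 h21 h22 h23
  simp only [Nat.choose, A0, A1, A2]
  push_cast
  linear_combination (m * x ^ 2 - (m + 2) * x + 3 / 2) * (1 * (-x) ^ 3 * (((m:ℝ) + 4) * ((m:ℝ) + 5) * ((m:ℝ) + 6))) * h00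
    + (m * x ^ 2 - (m + 2) * x + 3 / 2) * (3 * (-x) ^ 2 * (((m:ℝ) + 5) * ((m:ℝ) + 6))) * h01
    + (m * x ^ 2 - (m + 2) * x + 3 / 2) * (3 * (-x) ^ 1 * (((m:ℝ) + 6))) * h02
    + (m * x ^ 2 - (m + 2) * x + 3 / 2) * (1 * (-x) ^ 0 * (1)) * h03
    + (2 * m * x * (1 - x)) * (1 * (-x) ^ 3 * (((m:ℝ) + 4) * ((m:ℝ) + 5) * ((m:ℝ) + 6))) * h10
    + (2 * m * x * (1 - x)) * (3 * (-x) ^ 2 * (((m:ℝ) + 5) * ((m:ℝ) + 6))) * h11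
    + (2 * m * x * (1 - x)) * (3 * (-x) ^ 1 * (((m:ℝ) + 6))) * h12
    + (2 * m * x * (1 - x)) * (1 * (-x) ^ 0 * (1)) * h13
    + (m * x ^ 2 - (m - 2) * x - 1 / 2) * (1 * (-x) ^ 3 * (((m:ℝ) + 4) * ((m:ℝ) + 5) * ((m:ℝ) + 6))) * h20
    + (m * x ^ 2 - (m - 2) * x - 1 / 2) * (3 * (-x) ^ 2 * (((m:ℝ) + 5) * ((m:ℝ) + 6))) * h21
    + (m * x ^ 2 - (m - 2) * x - 1 / 2) * (3 * (-x) ^ 1 * (((m:ℝ) + 6))) * h22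
    + (m * x ^ 2 - (m - 2) * x - 1 / 2) * (1 * (-x) ^ 0 * (1)) * h23

lemma T_cen4 (m : ℕ) (x : ℝ) :
    T m x (fun t => (t - x) ^ 4) * (((m:ℝ) + 4) * ((m:ℝ) + 5) * ((m:ℝ) + 6) * ((m:ℝ) + 7)) =
      (((-144) * x ^ 0 + (1572) * x ^ 1 + (-5460) * x ^ 2 + (7776) * x ^ 3 + (-3888) * x ^ 4) + ((m:ℝ) + 2) * (((-156) * x ^ 1 + (864) * x ^ 2 + (-1416) * x ^ 3 + (708) * x ^ 4) + ((m:ℝ) + 2) * ((-12) * x ^ 2 + (24) * x ^ 3 + (-12) * x ^ 4))) := by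
  unfold T
  simp only [E_cen, Finset.sum_range_succ, Finset.sum_range_zero]

  have h00 := E_pow0 m 0 (by norm_num) x
  have h01 := E_pow1 m 0 (by norm_num) x
  have h02 := E_pow2 m 0 (by norm_num) x
  have h03 := E_pow3 m 0 (by norm_num) x
  have h04 := E_pow4 m 0 (by norm_num) x
  have h10 := E_pow0 m 1 (by norm_num) x
  have h11 := E_pow1 m 1 (by norm_num) x
  have h12 := E_pow2 m 1 (by norm_num) x
  have h13 := E_pow3 m 1 (by norm_num) x
  have h14 := E_pow4 m 1 (by norm_num) x
  have h20 := E_pow0 m 2 (by norm_num) x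
  have h21 := E_pow1 m 2 (by norm_num) x
  have h22 := E_pow2 m 2 (by norm_num) x
  have h23 := E_pow3 m 2 (by norm_num) x
  have h24 := E_pow4 m 2 (by norm_num) x
  push_cast at h00 h01 h02 h03 h04 h10 h11 h12 h13 h14 h20 h21 h22 h23 h24
  simp only [Nat.choose, A0, A1, A2]
  push_cast
  linear_combination (m * x ^ 2 - (m + 2) * x + 3 / 2) * (1 * (-x) ^ 4 * (((m:ℝ) + 4) * ((m:ℝ) + 5) * ((m:ℝ) + 6) * ((m:ℝ) + 7))) * h00
    + (m * x ^ 2 - (m + 2) * x + 3 / 2) * (4 * (-x) ^ 3 * (((m:ℝ) + 5) * ((m:ℝ) + 6) * ((m:ℝ) + 7))) * h01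
    + (m * x ^ 2 - (m + 2) * x + 3 / 2) * (6 * (-x) ^ 2 * (((m:ℝ) + 6) * ((m:ℝ) + 7))) * h02
    + (m * x ^ 2 - (m + 2) * x + 3 / 2) * (4 * (-x) ^ 1 * (((m:ℝ) + 7))) * h03
    + (m * x ^ 2 - (m + 2) * x + 3 / 2) * (1 * (-x) ^ 0 * (1)) * h04
    + (2 * m * x * (1 - x)) * (1 * (-x) ^ 4 * (((m:ℝ) + 4) * ((m:ℝ) + 5) * ((m:ℝ) + 6) * ((m:ℝ) + 7))) * h10
    + (2 * m * x * (1 - x)) * (4 * (-x) ^ 3 * (((m:ℝ) + 5) * ((m:ℝ) + 6) * ((m:ℝ) + 7))) * h11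
    + (2 * m * x * (1 - x)) * (6 * (-x) ^ 2 * (((m:ℝ) + 6) * ((m:ℝ) + 7))) * h12
    + (2 * m * x * (1 - x)) * (4 * (-x) ^ 1 * (((m:ℝ) + 7))) * h13
    + (2 * m * x * (1 - x)) * (1 * (-x) ^ 0 * (1)) * h14
    + (m * x ^ 2 - (m - 2) * x - 1 / 2) * (1 * (-x) ^ 4 * (((m:ℝ) + 4) * ((m:ℝ) + 5) * ((m:ℝ) + 6) * ((m:ℝ) + 7))) * h20
    + (m * x ^ 2 - (m - 2) * x - 1 / 2) * (4 * (-x) ^ 3 * (((m:ℝ) + 5) * ((m:ℝ) + 6) * ((m:ℝ) + 7))) * h21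
    + (m * x ^ 2 - (m - 2) * x - 1 / 2) * (6 * (-x) ^ 2 * (((m:ℝ) + 6) * ((m:ℝ) + 7))) * h22
    + (m * x ^ 2 - (m - 2) * x - 1 / 2) * (4 * (-x) ^ 1 * (((m:ℝ) + 7))) * h23
    + (m * x ^ 2 - (m - 2) * x - 1 / 2) * (1 * (-x) ^ 0 * (1)) * h24

lemma T_cen5 (m : ℕ) (x : ℝ) :
    T m x (fun t => (t - x) ^ 5) * (((m:ℝ) + 4) * ((m:ℝ) + 5) * ((m:ℝ) + 6) * ((m:ℝ) + 7) * ((m:ℝ) + 8)) =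
      (((-1080) * x ^ 0 + (13920) * x ^ 1 + (-63360) * x ^ 2 + (135840) * x ^ 3 + (-140400) * x ^ 4 + (56160) * x ^ 5) + ((m:ℝ) + 2) * (((-1680) * x ^ 1 + (13080) * x ^ 2 + (-35520) * x ^ 3 + (40200) * x ^ 4 + (-16080) * x ^ 5) + ((m:ℝ) + 2) * (((-360) * x ^ 2 + (1440) * x ^ 3 + (-1800) * x ^ 4 + (720) * x ^ 5) + ((m:ℝ) + 2) * (0)))) := by
  unfold T
  simp only [E_cen, Finset.sum_range_succ, Finset.sum_range_zero]

  have h00 := E_pow0 m 0 (by norm_num) x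
  have h01 := E_pow1 m 0 (by norm_num) x
  have h02 := E_pow2 m 0 (by norm_num) x
  have h03 := E_pow3 m 0 (by norm_num) x
  have h04 := E_pow4 m 0 (by norm_num) x
  have h05 := E_pow5 m 0 (by norm_num) x
  have h10 := E_pow0 m 1 (by norm_num) x
  have h11 := E_pow1 m 1 (by norm_num) x
  have h12 := E_pow2 m 1 (by norm_num) x
  have h13 := E_pow3 m 1 (by norm_num) x
  have h14 := E_pow4 m 1 (by norm_num) x
  have h15 := E_pow5 m 1 (by norm_num) x
  have h20 := E_pow0 m 2 (by norm_num) x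
  have h21 := E_pow1 m 2 (by norm_num) x
  have h22 := E_pow2 m 2 (by norm_num) x
  have h23 := E_pow3 m 2 (by norm_num) x
  have h24 := E_pow4 m 2 (by norm_num) x
  have h25 := E_pow5 m 2 (by norm_num) x
  push_cast at h00 h01 h02 h03 h04 h05 h10 h11 h12 h13 h14 h15 h20 h21 h22 h23 h24 h25
  simp only [Nat.choose, A0, A1, A2]
  push_cast
  linear_combination (m * x ^ 2 - (m + 2) * x + 3 / 2) * (1 * (-x) ^ 5 * (((m:ℝ) + 4) * ((m:ℝ) + 5) * ((m:ℝ) + 6) * ((m:ℝ) + 7) * ((m:ℝ) + 8))) * h00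
    + (m * x ^ 2 - (m + 2) * x + 3 / 2) * (5 * (-x) ^ 4 * (((m:ℝ) + 5) * ((m:ℝ) + 6) * ((m:ℝ) + 7) * ((m:ℝ) + 8))) * h01
    + (m * x ^ 2 - (m + 2) * x + 3 / 2) * (10 * (-x) ^ 3 * (((m:ℝ) + 6) * ((m:ℝ) + 7) * ((m:ℝ) + 8))) * h02
    + (m * x ^ 2 - (m + 2) * x + 3 / 2) * (10 * (-x) ^ 2 * (((m:ℝ) + 7) * ((m:ℝ) + 8))) * h03
    + (m * x ^ 2 - (m + 2) * x + 3 / 2) * (5 * (-x) ^ 1 * (((m:ℝ) + 8))) * h04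
    + (m * x ^ 2 - (m + 2) * x + 3 / 2) * (1 * (-x) ^ 0 * (1)) * h05
    + (2 * m * x * (1 - x)) * (1 * (-x) ^ 5 * (((m:ℝ) + 4) * ((m:ℝ) + 5) * ((m:ℝ) + 6) * ((m:ℝ) + 7) * ((m:ℝ) + 8))) * h10
    + (2 * m * x * (1 - x)) * (5 * (-x) ^ 4 * (((m:ℝ) + 5) * ((m:ℝ) + 6) * ((m:ℝ) + 7) * ((m:ℝ) + 8))) * h11
    + (2 * m * x * (1 - x)) * (10 * (-x) ^ 3 * (((m:ℝ) + 6) * ((m:ℝ) + 7) * ((m:ℝ) + 8))) * h12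
    + (2 * m * x * (1 - x)) * (10 * (-x) ^ 2 * (((m:ℝ) + 7) * ((m:ℝ) + 8))) * h13
    + (2 * m * x * (1 - x)) * (5 * (-x) ^ 1 * (((m:ℝ) + 8))) * h14
    + (2 * m * x * (1 - x)) * (1 * (-x) ^ 0 * (1)) * h15
    + (m * x ^ 2 - (m - 2) * x - 1 / 2) * (1 * (-x) ^ 5 * (((m:ℝ) + 4) * ((m:ℝ) + 5) * ((m:ℝ) + 6) * ((m:ℝ) + 7) * ((m:ℝ) + 8))) * h20
    + (m * x ^ 2 - (m - 2) * x - 1 / 2) * (5 * (-x) ^ 4 * (((m:ℝ) + 5) * ((m:ℝ) + 6) * ((m:ℝ) + 7) * ((m:ℝ) + 8))) * h21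
    + (m * x ^ 2 - (m - 2) * x - 1 / 2) * (10 * (-x) ^ 3 * (((m:ℝ) + 6) * ((m:ℝ) + 7) * ((m:ℝ) + 8))) * h22
    + (m * x ^ 2 - (m - 2) * x - 1 / 2) * (10 * (-x) ^ 2 * (((m:ℝ) + 7) * ((m:ℝ) + 8))) * h23
    + (m * x ^ 2 - (m - 2) * x - 1 / 2) * (5 * (-x) ^ 1 * (((m:ℝ) + 8))) * h24
    + (m * x ^ 2 - (m - 2) * x - 1 / 2) * (1 * (-x) ^ 0 * (1)) * h25

lemma E0_cen6 (m : ℕ) (x : ℝ) :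
    E m 0 x (fun t => (t - x) ^ 6) * (((m:ℝ) + 4) * ((m:ℝ) + 5) * ((m:ℝ) + 6) * ((m:ℝ) + 7) * ((m:ℝ) + 8) * ((m:ℝ) + 9)) =
      (((720) * x ^ 0 + (-13680) * x ^ 1 + (97920) * x ^ 2 + (-354960) * x ^ 3 + (704160) * x ^ 4 + (-736560) * x ^ 5 + (322560) * x ^ 6) + ((m:ℝ) + 2) * (((3600) * x ^ 1 + (-40320) * x ^ 2 + (177000) * x ^ 3 + (-380880) * x ^ 4 + (399240) * x ^ 5 + (-158640) * x ^ 6) + ((m:ℝ) + 2) * (((2160) * x ^ 2 + (-15120) * x ^ 3 + (37800) * x ^ 4 + (-38880) * x ^ 5 + (14040) * x ^ 6) + ((m:ℝ) + 2) * ((120) * x ^ 3 + (-360) * x ^ 4 + (360) * x ^ 5 + (-120) * x ^ 6)))) := by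
  simp only [E_cen, Finset.sum_range_succ, Finset.sum_range_zero]

  have h00 := E_pow0 m 0 (by norm_num) x
  have h01 := E_pow1 m 0 (by norm_num) x
  have h02 := E_pow2 m 0 (by norm_num) x
  have h03 := E_pow3 m 0 (by norm_num) x
  have h04 := E_pow4 m 0 (by norm_num) x
  have h05 := E_pow5 m 0 (by norm_num) x
  have h06 := E_pow6 m 0 (by norm_num) x
  push_cast at h00 h01 h02 h03 h04 h05 h06
  simp only [Nat.choose]
  push_cast
  linear_combination (1 * (-x) ^ 6 * (((m:ℝ) + 4) * ((m:ℝ) + 5) * ((m:ℝ) + 6) * ((m:ℝ) + 7) * ((m:ℝ) + 8) * ((m:ℝ) + 9))) * h00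
    + (6 * (-x) ^ 5 * (((m:ℝ) + 5) * ((m:ℝ) + 6) * ((m:ℝ) + 7) * ((m:ℝ) + 8) * ((m:ℝ) + 9))) * h01
    + (15 * (-x) ^ 4 * (((m:ℝ) + 6) * ((m:ℝ) + 7) * ((m:ℝ) + 8) * ((m:ℝ) + 9))) * h02
    + (20 * (-x) ^ 3 * (((m:ℝ) + 7) * ((m:ℝ) + 8) * ((m:ℝ) + 9))) * h03
    + (15 * (-x) ^ 2 * (((m:ℝ) + 8) * ((m:ℝ) + 9))) * h04
    + (6 * (-x) ^ 1 * (((m:ℝ) + 9))) * h05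
    + (1 * (-x) ^ 0 * (1)) * h06

lemma E1_cen6 (m : ℕ) (x : ℝ) :
    E m 1 x (fun t => (t - x) ^ 6) * (((m:ℝ) + 4) * ((m:ℝ) + 5) * ((m:ℝ) + 6) * ((m:ℝ) + 7) * ((m:ℝ) + 8) * ((m:ℝ) + 9)) =
      (((5040) * x ^ 0 + (-60480) * x ^ 1 + (302400) * x ^ 2 + (-806400) * x ^ 3 + (1209600) * x ^ 4 + (-967680) * x ^ 5 + (322560) * x ^ 6) + ((m:ℝ) + 2) * (((10800) * x ^ 1 + (-93600) * x ^ 2 + (324240) * x ^ 3 + (-558720) * x ^ 4 + (475920) * x ^ 5 + (-158640) * x ^ 6) + ((m:ℝ) + 2) * (((3600) * x ^ 2 + (-21240) * x ^ 3 + (45720) * x ^ 4 + (-42120) * x ^ 5 + (14040) * x ^ 6) + ((m:ℝ) + 2) * ((120) * x ^ 3 + (-360) * x ^ 4 + (360) * x ^ 5 + (-120) * x ^ 6)))) := by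
  simp only [E_cen, Finset.sum_range_succ, Finset.sum_range_zero]

  have h10 := E_pow0 m 1 (by norm_num) x
  have h11 := E_pow1 m 1 (by norm_num) x
  have h12 := E_pow2 m 1 (by norm_num) x
  have h13 := E_pow3 m 1 (by norm_num) x
  have h14 := E_pow4 m 1 (by norm_num) x
  have h15 := E_pow5 m 1 (by norm_num) x
  have h16 := E_pow6 m 1 (by norm_num) x
  push_cast at h10 h11 h12 h13 h14 h15 h16
  simp only [Nat.choose]
  push_cast
  linear_combination (1 * (-x) ^ 6 * (((m:ℝ) + 4) * ((m:ℝ) + 5) * ((m:ℝ) + 6) * ((m:ℝ) + 7) * ((m:ℝ) + 8) * ((m:ℝ) + 9))) * h10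
    + (6 * (-x) ^ 5 * (((m:ℝ) + 5) * ((m:ℝ) + 6) * ((m:ℝ) + 7) * ((m:ℝ) + 8) * ((m:ℝ) + 9))) * h11
    + (15 * (-x) ^ 4 * (((m:ℝ) + 6) * ((m:ℝ) + 7) * ((m:ℝ) + 8) * ((m:ℝ) + 9))) * h12
    + (20 * (-x) ^ 3 * (((m:ℝ) + 7) * ((m:ℝ) + 8) * ((m:ℝ) + 9))) * h13
    + (15 * (-x) ^ 2 * (((m:ℝ) + 8) * ((m:ℝ) + 9))) * h14
    + (6 * (-x) ^ 1 * (((m:ℝ) + 9))) * h15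
    + (1 * (-x) ^ 0 * (1)) * h16

lemma E2_cen6 (m : ℕ) (x : ℝ) :
    E m 2 x (fun t => (t - x) ^ 6) * (((m:ℝ) + 4) * ((m:ℝ) + 5) * ((m:ℝ) + 6) * ((m:ℝ) + 7) * ((m:ℝ) + 8) * ((m:ℝ) + 9)) =
      (((20160) * x ^ 0 + (-186480) * x ^ 1 + (730800) * x ^ 2 + (-1547280) * x ^ 3 + (1859760) * x ^ 4 + (-1198800) * x ^ 5 + (322560) * x ^ 6) + ((m:ℝ) + 2) * (((25200) * x ^ 1 + (-181800) * x ^ 2 + (526920) * x ^ 3 + (-764280) * x ^ 4 + (552600) * x ^ 5 + (-158640) * x ^ 6) + ((m:ℝ) + 2) * (((5400) * x ^ 2 + (-28080) * x ^ 3 + (54000) * x ^ 4 + (-45360) * x ^ 5 + (14040) * x ^ 6) + ((m:ℝ) + 2) * ((120) * x ^ 3 + (-360) * x ^ 4 + (360) * x ^ 5 + (-120) * x ^ 6)))) := by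
  simp only [E_cen, Finset.sum_range_succ, Finset.sum_range_zero]

  have h20 := E_pow0 m 2 (by norm_num) x
  have h21 := E_pow1 m 2 (by norm_num) x
  have h22 := E_pow2 m 2 (by norm_num) x
  have h23 := E_pow3 m 2 (by norm_num) x
  have h24 := E_pow4 m 2 (by norm_num) x
  have h25 := E_pow5 m 2 (by norm_num) x
  have h26 := E_pow6 m 2 (by norm_num) x
  push_cast at h20 h21 h22 h23 h24 h25 h26
  simp only [Nat.choose]
  push_cast
  linear_combination (1 * (-x) ^ 6 * (((m:ℝ) + 4) * ((m:ℝ) + 5) * ((m:ℝ) + 6) * ((m:ℝ) + 7) * ((m:ℝ) + 8) * ((m:ℝ) + 9))) * h20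
    + (6 * (-x) ^ 5 * (((m:ℝ) + 5) * ((m:ℝ) + 6) * ((m:ℝ) + 7) * ((m:ℝ) + 8) * ((m:ℝ) + 9))) * h21
    + (15 * (-x) ^ 4 * (((m:ℝ) + 6) * ((m:ℝ) + 7) * ((m:ℝ) + 8) * ((m:ℝ) + 9))) * h22
    + (20 * (-x) ^ 3 * (((m:ℝ) + 7) * ((m:ℝ) + 8) * ((m:ℝ) + 9))) * h23
    + (15 * (-x) ^ 2 * (((m:ℝ) + 8) * ((m:ℝ) + 9))) * h24
    + (6 * (-x) ^ 1 * (((m:ℝ) + 9))) * h25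
    + (1 * (-x) ^ 0 * (1)) * h26

lemma taylor_aux (n : ℕ) : ∀ f : ℝ → ℝ, ContDiffOn ℝ n f (Set.Icc 0 1) → ∀ x ∈ Set.Icc (0:ℝ) 1,
    ∃ c : ℕ → ℝ, (0 < n → c 0 = f x) ∧ ∃ M : ℝ, 0 ≤ M ∧ ∀ t ∈ Set.Icc (0:ℝ) 1,
      |f t - ∑ j ∈ Finset.range n, c j * (t - x) ^ j| ≤ M * |t - x| ^ n := by
  induction n with
  | zero =>
    intro f hf x hx
    obtain ⟨M, hM⟩ := isCompact_Icc.exists_bound_of_continuousOn hf.continuousOn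
    refine ⟨0, by simp, M, (norm_nonneg _).trans (hM x hx), fun t ht => ?_⟩
    simpa using hM t ht
  | succ n ih =>
    intro f hf x hx
    have hu : UniqueDiffOn ℝ (Set.Icc (0:ℝ) 1) := uniqueDiffOn_Icc zero_lt_one
    push_cast at hf
    rw [contDiffOn_succ_iff_derivWithin hu] at hf
    obtain ⟨hd, -, hc⟩ := hf
    obtain ⟨d, -, M, hM, hb⟩ := ih _ hc x hx
    refine ⟨fun j => if j = 0 then f x else d (j - 1) / j, by simp, M, hM, fun t ht => ?_⟩
    set h : ℝ → ℝ := fun t => f t - ∑ j ∈ Finset.range n, d j / ((j:ℝ) + 1) * (t - x) ^ (j + 1)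
      with hh
    have hder : ∀ s ∈ Set.Icc (0:ℝ) 1, HasDerivWithinAt h
        (derivWithin f (Set.Icc 0 1) s - ∑ j ∈ Finset.range n, d j * (s - x) ^ j)
        (Set.Icc 0 1) s := by
      intro s hs
      refine (hd s hs).hasDerivWithinAt.sub ?_
      refine HasDerivWithinAt.fun_sum fun j _ => ?_
      have h1 := ((((hasDerivAt_id s).sub_const x).pow (j+1)).const_mul
        (d j / ((j:ℝ) + 1))).hasDerivWithinAt (s := Set.Icc 0 1)
      refine h1.congr_deriv ?_
      have : (j:ℝ) + 1 ≠ 0 := by positivity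
      simp
      field_simp
    have hsub : Set.uIcc x t ⊆ Set.Icc 0 1 := Set.uIcc_subset_Icc hx ht
    have key := Convex.norm_image_sub_le_of_norm_hasDerivWithin_le (C := M * |t - x| ^ n)
      (s := Set.uIcc x t) (f := h) (x := x) (y := t)
      (fun s hs => (hder s (hsub hs)).mono hsub)
      (fun s hs => (hb s (hsub hs)).trans (by
        have := Set.abs_sub_left_of_mem_uIcc hs
        gcongr))
      (convex_uIcc x t) Set.left_mem_uIcc Set.right_mem_uIcc
    rw [Real.norm_eq_abs, Real.norm_eq_abs] at key
    rw [Finset.sum_range_succ']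
    have e : f t - (∑ k ∈ Finset.range n, (if k + 1 = 0 then f x else d (k + 1 - 1) / ((k + 1 : ℕ):ℝ))
        * (t - x) ^ (k + 1) + (if 0 = 0 then f x else d (0 - 1) / ((0 : ℕ):ℝ)) * (t - x) ^ 0)
        = h t - h x := by
      simp [hh]
      ring
    rw [e, pow_succ, ← mul_assoc]
    exact key

lemma bern_nat (n k : ℕ) (x : ℝ) : bern n k x = n.choose k * x ^ k * (1 - x) ^ (n - k) := by
  unfold bern
  split_ifs with h
  · simp
  · have : n < k := by
      by_contra h'
      exact h ⟨by positivity, by exact_mod_cast not_lt.1 h'⟩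
    simp [Nat.choose_eq_zero_of_lt this]

lemma bern_neg (n : ℕ) (k : ℤ) (hk : k < 0) (x : ℝ) : bern n k x = 0 := by
  unfold bern
  rw [if_neg]
  omega

lemma bern_gt (n : ℕ) (k : ℤ) (hk : (n:ℤ) < k) (x : ℝ) : bern n k x = 0 := by
  unfold bern
  rw [if_neg]
  omega

lemma DM2_eq (m : ℕ) (f : ℝ → ℝ) (x : ℝ) : DM2 (m + 2) f x = T m x f := by
  have h0 : ∀ G : ℕ → ℝ, ∑ k ∈ Finset.range (m + 2 + 1), bern m k x * G k = S m x G := by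
    intro G
    rw [Finset.sum_range_succ, Finset.sum_range_succ]
    simp [S, bern_nat, bern_gt]
  have h1 : ∀ G : ℕ → ℝ, ∑ k ∈ Finset.range (m + 2 + 1), bern m ((k:ℤ) - 1) x * G k
      = S m x (fun k => G (k + 1)) := by
    intro G
    rw [Finset.sum_range_succ', Finset.sum_range_succ]
    simp [S, bern_nat, bern_gt, bern_neg]
  have h2 : ∀ G : ℕ → ℝ, ∑ k ∈ Finset.range (m + 2 + 1), bern m ((k:ℤ) - 2) x * G k
      = S m x (fun k => G (k + 2)) := by
    intro G
    rw [Finset.sum_range_succ', Finset.sum_range_succ']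
    have : ∀ k : ℕ, (((k + 1 + 1 : ℕ) : ℤ) - 2) = k := fun k => by push_cast; ring
    simp only [this]
    simp [S, bern_nat, bern_neg]
  unfold T E
  rw [← h0, ← h1 (fun k => L (m+2) k f), ← h2 (fun k => L (m+2) k f)]
  unfold DM2
  simp only [Finset.mul_sum, ← Finset.sum_add_distrib]
  refine Finset.sum_congr rfl fun k _ => ?_
  simp only [pM2, L, A0, A1, A2, add_zero, bern_nat (m+2), Nat.add_sub_cancel]
  push_cast
  ring

lemma T_sum {ι : Type*} (s : Finset ι) (m : ℕ) (x : ℝ) (c : ι → ℝ) (g : ι → ℝ → ℝ)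
    (hg : ∀ i ∈ s, ContinuousOn (g i) (Set.Icc 0 1)) :
    T m x (fun t => ∑ i ∈ s, c i * g i t) = ∑ j ∈ s, c j * T m x (g j) := by
  unfold T
  simp only [E_sum s _ _ _ c g hg, Finset.mul_sum, ← Finset.sum_add_distrib]
  exact Finset.sum_congr rfl fun _ _ => by ring

lemma T_sub (m : ℕ) (x : ℝ) (f g : ℝ → ℝ) (hf : ContinuousOn f (Set.Icc 0 1))
    (hg : ContinuousOn g (Set.Icc 0 1)) :
    T m x (fun t => f t - g t) = T m x f - T m x g := by
  have h := T_sum (Finset.univ : Finset (Fin 2)) m x ![1, -1] ![f, g] (by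
    intro i _
    fin_cases i
    · exact hf
    · exact hg)
  simp only [Fin.sum_univ_two, Matrix.cons_val_zero, Matrix.cons_val_one] at h
  rw [show (fun t => f t - g t) = (fun t => 1 * f t + -1 * g t) from by funext t; ring, h]
  ring

lemma L_bound (n k : ℕ) (x M : ℝ) (R : ℝ → ℝ)
    (hR : ∀ t ∈ Set.Icc (0:ℝ) 1, |R t| ≤ M * (t - x) ^ 6) :
    |L n k R| ≤ M * L n k (fun t => (t - x) ^ 6) := by
  unfold L
  rw [abs_mul, abs_of_nonneg (by positivity : (0:ℝ) ≤ n + 1), mul_left_comm,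
    ← intervalIntegral.integral_const_mul M]
  refine mul_le_mul_of_nonneg_left ?_ (by positivity)
  rw [← Real.norm_eq_abs]
  refine intervalIntegral.norm_integral_le_of_norm_le zero_le_one
    (Eventually.of_forall fun t ht => ?_) (Continuous.intervalIntegrable (by fun_prop) _ _)
  have h1 : 0 ≤ t := ht.1.le
  have h2 : 0 ≤ 1 - t := by linarith [ht.2]
  have hw : 0 ≤ (n.choose k * t ^ k * (1 - t) ^ (n - k) : ℝ) := by positivity
  rw [Real.norm_eq_abs, abs_mul, abs_of_nonneg hw, mul_left_comm]
  exact mul_le_mul_of_nonneg_left (hR t ⟨h1, ht.2⟩) hw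

lemma E_bound (m i : ℕ) (x M : ℝ) (hx : x ∈ Set.Icc (0:ℝ) 1) (R : ℝ → ℝ)
    (hR : ∀ t ∈ Set.Icc (0:ℝ) 1, |R t| ≤ M * (t - x) ^ 6) :
    |E m i x R| ≤ M * E m i x (fun t => (t - x) ^ 6) := by
  unfold E S
  rw [Finset.mul_sum]
  refine (Finset.abs_sum_le_sum_abs _ _).trans (Finset.sum_le_sum fun k _ => ?_)
  have h1 : 0 ≤ x := hx.1
  have h2 : 0 ≤ 1 - x := by linarith [hx.2]
  have hw : 0 ≤ (m.choose k * x ^ k * (1 - x) ^ (m - k) : ℝ) := by positivity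
  rw [abs_mul, abs_of_nonneg hw, mul_left_comm]
  exact mul_le_mul_of_nonneg_left (L_bound _ _ _ _ _ hR) hw

/-- Growth of order at most `s`. -/
def Gr (s : ℕ) (p : ℕ → ℝ) : Prop := ∃ C : ℝ, ∀ m : ℕ, |p m| ≤ C * ((m:ℝ) + 2) ^ s

lemma Gr_const (q : ℝ) : Gr 0 (fun _ => q) := ⟨|q|, fun m => by simp⟩

lemma Gr_step (s : ℕ) (q : ℝ) (p : ℕ → ℝ) (h : Gr s p) :
    Gr (s + 1) (fun m => q + ((m:ℝ) + 2) * p m) := by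
  obtain ⟨C, hC⟩ := h
  refine ⟨|q| + C, fun m => ?_⟩
  have h2 : (1:ℝ) ≤ (m:ℝ) + 2 := by linarith [(Nat.cast_nonneg m : (0:ℝ) ≤ m)]
  have h1 : (1:ℝ) ≤ ((m:ℝ) + 2) ^ (s + 1) := one_le_pow₀ h2
  calc |q + ((m:ℝ) + 2) * p m| ≤ |q| + ((m:ℝ) + 2) * |p m| := by
        refine (abs_add_le _ _).trans ?_
        rw [abs_mul, abs_of_nonneg (by positivity : (0:ℝ) ≤ m + 2)]
    _ ≤ |q| * ((m:ℝ) + 2) ^ (s + 1) + ((m:ℝ) + 2) * (C * ((m:ℝ) + 2) ^ s) := by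
        gcongr
        · exact le_mul_of_one_le_right (abs_nonneg _) h1
        · exact hC m
    _ = _ := by ring

lemma Gr_div (s r : ℕ) (u D p : ℕ → ℝ) (h : Gr s p) (hu : ∀ m, u m * D m = p m)
    (hD : ∀ m : ℕ, ((m:ℝ) + 2) ^ (s + r) ≤ D m) :
    ∃ C : ℝ, ∀ m : ℕ, |u m| ≤ C / ((m:ℝ) + 2) ^ r := by
  obtain ⟨C, hC⟩ := h
  refine ⟨C, fun m => ?_⟩
  have hp : (0:ℝ) < ((m:ℝ) + 2) ^ s := by positivity
  have hr : (0:ℝ) < ((m:ℝ) + 2) ^ r := by positivity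
  rw [le_div_iff₀ hr]
  have h1 := hC m
  have hpos : 0 < D m := lt_of_lt_of_le (by positivity) (hD m)
  rw [← hu m, abs_mul, abs_of_pos hpos] at h1
  have h2 : |u m| * ((m:ℝ) + 2) ^ (s + r) ≤ C * ((m:ℝ) + 2) ^ s :=
    (mul_le_mul_of_nonneg_left (hD m) (abs_nonneg _)).trans h1
  rw [pow_add] at h2
  exact le_of_mul_le_mul_right (by linarith) hp

lemma T_bd (x : ℝ) : ∀ j ∈ Finset.Icc 1 5, ∃ C : ℝ, ∀ m : ℕ,
    |T m x (fun t => (t - x) ^ j)| ≤ C / ((m:ℝ) + 2) ^ 2 := by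
  intro j hj
  obtain ⟨h1, h5⟩ := Finset.mem_Icc.1 hj
  interval_cases j
  · refine ⟨0, fun m => ?_⟩
    have h := T_cen1 m x
    have hm : (m:ℝ) + 4 ≠ 0 := by positivity
    rcases mul_eq_zero.1 h with h | h
    · rw [h]; simp
    · exact absurd h hm
  · refine Gr_div 0 2 _ _ _ (Gr_const _) (fun m => T_cen2 m x) fun m => ?_
    rw [show ((m:ℝ) + 2) ^ (0 + 2) = ((m:ℝ) + 2) * ((m:ℝ) + 2) by ring]
    gcongr <;> norm_num
  · refine Gr_div 1 2 _ _ _ (Gr_step _ _ _ (Gr_const _)) (fun m => T_cen3 m x) fun m => ?_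
    rw [show ((m:ℝ) + 2) ^ (1 + 2) = ((m:ℝ) + 2) * ((m:ℝ) + 2) * ((m:ℝ) + 2) by ring]
    gcongr <;> norm_num
  · refine Gr_div 2 2 _ _ _ (Gr_step _ _ _ (Gr_step _ _ _ (Gr_const _)))
      (fun m => T_cen4 m x) fun m => ?_
    rw [show ((m:ℝ) + 2) ^ (2 + 2)
      = ((m:ℝ) + 2) * ((m:ℝ) + 2) * ((m:ℝ) + 2) * ((m:ℝ) + 2) by ring]
    gcongr <;> norm_num
  · refine Gr_div 3 2 _ _ _ (Gr_step _ _ _ (Gr_step _ _ _ (Gr_step _ _ _ (Gr_const _))))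
      (fun m => T_cen5 m x) fun m => ?_
    rw [show ((m:ℝ) + 2) ^ (3 + 2)
      = ((m:ℝ) + 2) * ((m:ℝ) + 2) * ((m:ℝ) + 2) * ((m:ℝ) + 2) * ((m:ℝ) + 2) by ring]
    gcongr <;> norm_num

lemma E_bd (x : ℝ) : ∀ i ∈ Finset.range 3, ∃ C : ℝ, ∀ m : ℕ,
    |E m i x (fun t => (t - x) ^ 6)| ≤ C / ((m:ℝ) + 2) ^ 3 := by
  intro i hi
  have hi := Finset.mem_range.1 hi
  have hD : ∀ m : ℕ, ((m:ℝ) + 2) ^ (3 + 3) ≤ ((m:ℝ) + 4) * ((m:ℝ) + 5) * ((m:ℝ) + 6)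
      * ((m:ℝ) + 7) * ((m:ℝ) + 8) * ((m:ℝ) + 9) := by
    intro m
    rw [show ((m:ℝ) + 2) ^ (3 + 3) = ((m:ℝ) + 2) * ((m:ℝ) + 2) * ((m:ℝ) + 2) * ((m:ℝ) + 2)
      * ((m:ℝ) + 2) * ((m:ℝ) + 2) by ring]
    gcongr <;> norm_num
  interval_cases i
  · exact Gr_div 3 3 _ _ _ (Gr_step _ _ _ (Gr_step _ _ _ (Gr_step _ _ _ (Gr_const _))))
      (fun m => E0_cen6 m x) hD
  · exact Gr_div 3 3 _ _ _ (Gr_step _ _ _ (Gr_step _ _ _ (Gr_step _ _ _ (Gr_const _))))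
      (fun m => E1_cen6 m x) hD
  · exact Gr_div 3 3 _ _ _ (Gr_step _ _ _ (Gr_step _ _ _ (Gr_step _ _ _ (Gr_const _))))
      (fun m => E2_cen6 m x) hD

lemma A_bd (m : ℕ) (x : ℝ) (hx : x ∈ Set.Icc (0:ℝ) 1) :
    |A0 m x| ≤ 4 * ((m:ℝ) + 2) ∧ |A1 m x| ≤ 4 * ((m:ℝ) + 2) ∧ |A2 m x| ≤ 4 * ((m:ℝ) + 2) := by
  obtain ⟨h0, h1⟩ := hx
  have hm : (0:ℝ) ≤ m := Nat.cast_nonneg m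
  have a : 0 ≤ (m:ℝ) * x := by positivity
  have b : (m:ℝ) * x ≤ m := mul_le_of_le_one_right hm h1
  have c : 0 ≤ (m:ℝ) * x ^ 2 := by positivity
  have d : (m:ℝ) * x ^ 2 ≤ m * x := by nlinarith
  refine ⟨?_, ?_, ?_⟩ <;> rw [abs_le] <;> constructor <;> simp only [A0, A1, A2] <;> nlinarith

lemma R_bd (x M C0 C1 C2 : ℝ) (m : ℕ) (hx : x ∈ Set.Icc (0:ℝ) 1) (hM : 0 ≤ M) (R : ℝ → ℝ)
    (hR : ∀ t ∈ Set.Icc (0:ℝ) 1, |R t| ≤ M * (t - x) ^ 6)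
    (h0 : |E m 0 x (fun t => (t - x) ^ 6)| ≤ C0 / ((m:ℝ) + 2) ^ 3)
    (h1 : |E m 1 x (fun t => (t - x) ^ 6)| ≤ C1 / ((m:ℝ) + 2) ^ 3)
    (h2 : |E m 2 x (fun t => (t - x) ^ 6)| ≤ C2 / ((m:ℝ) + 2) ^ 3) :
    |T m x R| ≤ (4 * M * (C0 + C1 + C2)) / ((m:ℝ) + 2) ^ 2 := by
  have key : ∀ (i : ℕ) (A C : ℝ), |A| ≤ 4 * ((m:ℝ) + 2) →
      |E m i x (fun t => (t - x) ^ 6)| ≤ C / ((m:ℝ) + 2) ^ 3 →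
      |A * E m i x R| ≤ 4 * M * C / ((m:ℝ) + 2) ^ 2 := by
    intro i A C hA hE
    have hb := E_bound m i x M hx R hR
    have h3 : |E m i x R| ≤ M * (C / ((m:ℝ) + 2) ^ 3) :=
      hb.trans (mul_le_mul_of_nonneg_left ((le_abs_self _).trans hE) hM)
    rw [abs_mul]
    calc |A| * |E m i x R| ≤ (4 * ((m:ℝ) + 2)) * (M * (C / ((m:ℝ) + 2) ^ 3)) := by gcongr
      _ = _ := by
        have : (m:ℝ) + 2 ≠ 0 := by positivity
        field_simp
  obtain ⟨a0, a1, a2⟩ := A_bd m x hx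
  have k0 := key 0 _ _ a0 h0
  have k1 := key 1 _ _ a1 h1
  have k2 := key 2 _ _ a2 h2
  unfold T
  refine (abs_add_three _ _ _).trans ?_
  calc _ ≤ 4 * M * C0 / ((m:ℝ) + 2) ^ 2 + 4 * M * C1 / ((m:ℝ) + 2) ^ 2
        + 4 * M * C2 / ((m:ℝ) + 2) ^ 2 := by linarith
    _ = _ := by ring

theorem DM2_order_of_approximation (f : ℝ → ℝ) (hf : ContDiffOn ℝ 6 f (Set.Icc 0 1))
    (x : ℝ) (hx : x ∈ Set.Icc (0:ℝ) 1) :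
    ∃ C > (0:ℝ), ∃ N : ℕ, ∀ n : ℕ, N ≤ n →
      |DM2 n f x - f x| ≤ C / (n : ℝ) ^ 2 := by
  obtain ⟨c, hc0, M, hM, hR⟩ := taylor_aux 6 f (by exact_mod_cast hf) x hx
  have hc0 := hc0 (by norm_num)
  obtain ⟨C0, h0⟩ := E_bd x 0 (by simp)
  obtain ⟨C1, h1⟩ := E_bd x 1 (by simp)
  obtain ⟨C2, h2⟩ := E_bd x 2 (by simp)
  choose! K hK using T_bd x
  set B : ℝ := 4 * M * (C0 + C1 + C2) + ∑ j ∈ Finset.Icc 1 5, |c j| * K j with hB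
  refine ⟨|B| + 1, by positivity, 2, fun n hn => ?_⟩
  obtain ⟨m, rfl⟩ : ∃ m, n = m + 2 := ⟨n - 2, by omega⟩
  rw [DM2_eq]
  push_cast
  have hrem := R_bd x M C0 C1 C2 m hx hM
    (fun t => f t - ∑ j ∈ Finset.range 6, c j * (t - x) ^ j)
    (fun t ht => (hR t ht).trans_eq (by rw [Even.pow_abs (by decide)])) (h0 m) (h1 m) (h2 m)
  rw [T_sub _ _ _ _ hf.continuousOn (by fun_prop),
    T_sum _ _ _ c (fun j t => (t - x) ^ j) (fun j _ => by fun_prop)] at hrem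
  have hz : T m x (fun t => (t - x) ^ 0) = 1 := by
    have := T_cen0 m x
    norm_num at this ⊢
    exact this
  have hs : ∑ j ∈ Finset.range 6, c j * T m x (fun t => (t - x) ^ j)
      = f x + ∑ j ∈ Finset.Icc 1 5, c j * T m x (fun t => (t - x) ^ j) := by
    rw [Finset.sum_range_succ', hz, hc0, mul_one, add_comm]
    congr 1
  rw [hs] at hrem
  have hsum : |∑ j ∈ Finset.Icc 1 5, c j * T m x (fun t => (t - x) ^ j)|
      ≤ (∑ j ∈ Finset.Icc 1 5, |c j| * K j) / ((m:ℝ) + 2) ^ 2 := by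
    rw [Finset.sum_div]
    refine (Finset.abs_sum_le_sum_abs _ _).trans (Finset.sum_le_sum fun j hj => ?_)
    rw [abs_mul, mul_div_assoc]
    exact mul_le_mul_of_nonneg_left (hK j hj m) (abs_nonneg _)
  have hfin : |T m x f - f x| ≤ B / ((m:ℝ) + 2) ^ 2 := by
    rw [hB, add_div]
    refine le_trans ?_ (add_le_add hrem hsum)
    refine le_trans (le_of_eq ?_) (abs_add_le _ _)
    congr 1
    ring
  refine hfin.trans ?_
  gcongr
  linarith [le_abs_self B]
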